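/- arXiv:2410.22531 — 11 statements merged into one kernel-verified Lean document; each statement's English description precedes it below -/
import Mathlib

section
/- Let K ⊆ L be a finite extension of fields of characteristic zero, and let A and B be nonzero K-linear subspaces of L. Let AB denote the K-linear span of the set of products {ab : a ∈ A, b ∈ B}, and let Stab(AB) := {x ∈ L : x·(AB) ⊆ AB}. Then dim_K(AB) ≥ dim_K(A) + dim_K(B) − dim_K(Stab(AB)). -/
open Module

/-- The stabilizer of a `K`-subspace `C` of `L`: elements `x ∈ L` with `x • C ⊆ C`. -/
def mulStab {K L : Type*} [Field K] [Field L] [Algebra K L] (C : Submodule K L) :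
    Submodule K L where
  carrier := {x : L | ∀ c ∈ C, x * c ∈ C}
  add_mem' := by
    intro a b ha hb c hc
    simpa [add_mul] using C.add_mem (ha c hc) (hb c hc)
  zero_mem' := by
    intro c hc
    simpa using C.zero_mem
  smul_mem' := by
    intro r x hx c hc
    simpa [smul_mul_assoc] using C.smul_mem r (hx c hc)

/-- The stabilizer as a subalgebra. -/
def stabAlg {K L : Type*} [Field K] [Field L] [Algebra K L] (C : Submodule K L) :
    Subalgebra K L where
  carrier := {x : L | ∀ c ∈ C, x * c ∈ C}
  add_mem' := by
    intro a b ha hb c hc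
    simpa [add_mul] using C.add_mem (ha c hc) (hb c hc)
  mul_mem' := by
    intro a b ha hb c hc
    rw [mul_assoc]
    exact ha _ (hb c hc)
  algebraMap_mem' := by
    intro r c hc
    rw [← Algebra.smul_def]
    exact C.smul_mem r hc

lemma mem_stabAlg {K L : Type*} [Field K] [Field L] [Algebra K L] (C : Submodule K L) (x : L) :
    x ∈ stabAlg C ↔ ∀ c ∈ C, x * c ∈ C := Iff.rfl

lemma mem_mulStab {K L : Type*} [Field K] [Field L] [Algebra K L] (C : Submodule K L) (x : L) :
    x ∈ mulStab C ↔ ∀ c ∈ C, x * c ∈ C := Iff.rfl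

lemma finrank_map_mulLeft {K L : Type*} [Field K] [Field L] [Algebra K L] (s : L) (hs : s ≠ 0)
    (A : Submodule K L) :
    finrank K (A.map (LinearMap.mulLeft K s)) = finrank K A := by
  have hinj : Function.Injective (LinearMap.mulLeft K s) := fun x y h => by
    simpa [hs] using h
  exact (Submodule.equivMapOfInjective _ hinj A).finrank_eq.symm

/-- Local form: the e-transform argument. -/
lemma kneser_local {K L : Type*} [Field K] [Field L] [Algebra K L] [FiniteDimensional K L]
    (a : L) (ha0 : a ≠ 0) : ∀ (n : ℕ) (A B : Submodule K L), finrank K A = n → a ∈ A →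
    ∃ V : Submodule K L, (∀ b ∈ B, a * b ∈ V) ∧ V ≤ A * B ∧
      finrank K A + finrank K B ≤ finrank K V + finrank K (mulStab V) := by
  intro n
  induction n using Nat.strong_induction_on with
  | _ n ih =>
  intro A B hn ha
  by_cases h : ∀ b ∈ B, ∀ x ∈ A, b / a * x ∈ B
  · refine ⟨A * B, fun b hb => Submodule.mul_mem_mul ha hb, le_rfl, ?_⟩
    have hB : finrank K B ≤ finrank K (A * B : Submodule K L) := by
      rw [← finrank_map_mulLeft a ha0 B]
      apply Submodule.finrank_mono
      rintro _ ⟨b, hb, rfl⟩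
      exact Submodule.mul_mem_mul ha hb
    have hA : finrank K A ≤ finrank K (mulStab (A * B)) := by
      rw [← finrank_map_mulLeft a⁻¹ (inv_ne_zero ha0) A]
      apply Submodule.finrank_mono
      rintro _ ⟨x, hx, rfl⟩
      rw [mem_mulStab]
      intro c hc
      refine Submodule.mul_induction_on hc ?_ ?_
      · intro y hy b hb
        have h1 := h b hb x hx
        have : (LinearMap.mulLeft K a⁻¹) x * (y * b) = y * (b / a * x) := by
          simp only [LinearMap.mulLeft_apply]; field_simp
        rw [this]
        exact Submodule.mul_mem_mul hy h1
      · intro y z hy hz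
        rw [mul_add]
        exact Submodule.add_mem _ hy hz
    omega
  · push Not at h
    obtain ⟨b, hb, x, hx, hbx⟩ := h
    have hb0 : b ≠ 0 := by
      rintro rfl
      exact hbx (by simp)
    set s := b / a with hs
    have hs0 : s ≠ 0 := div_ne_zero hb0 ha0
    set A' := A ⊓ B.comap (LinearMap.mulLeft K s) with hA'
    set B' := B ⊔ A.map (LinearMap.mulLeft K s) with hB'
    have hlt : finrank K A' < n := by
      rw [← hn]
      apply Submodule.finrank_lt_finrank_of_lt
      refine lt_of_le_of_ne inf_le_left fun he => hbx ?_
      rw [← he] at hx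
      exact hx.2
    have haA' : a ∈ A' := by
      refine ⟨ha, ?_⟩
      have : s * a = b := by rw [hs]; field_simp
      simpa [this] using hb
    obtain ⟨V, h1, h2, h3⟩ := ih _ hlt A' B' rfl haA'
    refine ⟨V, fun c hc => h1 c (Submodule.mem_sup_left hc), h2.trans ?_, ?_⟩
    · rw [hB', Submodule.mul_sup]
      refine sup_le (mul_le_mul' inf_le_left le_rfl) ?_
      rw [Submodule.mul_le]
      rintro u ⟨_, hu⟩ _ ⟨v, hv, rfl⟩
      have : u * (LinearMap.mulLeft K s) v = v * (s * u) := by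
        simp only [LinearMap.mulLeft_apply]; ring
      rw [this]
      exact Submodule.mul_mem_mul hv hu
    · have e1 : A'.map (LinearMap.mulLeft K s) = B ⊓ A.map (LinearMap.mulLeft K s) := by
        ext y
        constructor
        · rintro ⟨u, ⟨hu1, hu2⟩, rfl⟩
          exact ⟨hu2, u, hu1, rfl⟩
        · rintro ⟨hy, u, hu, rfl⟩
          exact ⟨u, ⟨hu, hy⟩, rfl⟩
      have e2 := Submodule.finrank_sup_add_finrank_inf_eq B (A.map (LinearMap.mulLeft K s))
      rw [← e1, finrank_map_mulLeft s hs0, finrank_map_mulLeft s hs0, ← hB'] at e2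
      omega

/-- Hou–Leung–Xiang: for nonzero `K`-subspaces `A, B` of a finite extension `L/K` in
characteristic zero, `dim (A*B) ≥ dim A + dim B - dim Stab(A*B)`. -/
theorem stmt0 {K L : Type*} [Field K] [Field L] [Algebra K L] [FiniteDimensional K L]
    [CharZero K] (A B : Submodule K L) (hA : A ≠ ⊥) (hB : B ≠ ⊥) :
    finrank K A + finrank K B ≤
      finrank K (A * B : Submodule K L) + finrank K (mulStab (A * B)) := by
  have hfin : Finite (IntermediateField K L) :=
    Field.finite_intermediateField_of_exists_primitive_element K L
      (Field.exists_primitive_element K L)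
  have hfin' : Finite (Subalgebra K L) :=
    Finite.of_equiv _ (subalgebraEquivIntermediateField (K := K) (L := L)).toEquiv.symm
  have key : ∀ a : A, ∃ V : Submodule K L, a ≠ 0 → (∀ b ∈ B, (a : L) * b ∈ V) ∧ V ≤ A * B ∧
      finrank K A + finrank K B ≤ finrank K V + finrank K (mulStab V) := by
    intro a
    by_cases h : a = 0
    · exact ⟨⊥, fun h' => absurd h h'⟩
    · obtain ⟨V, hV⟩ := kneser_local (a : L) (by simpa using h) _ A B rfl a.2
      exact ⟨V, fun _ => hV⟩
  choose V hV using key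
  let W : Subalgebra K L → Subspace K A := fun H =>
    Submodule.span K {a : A | a ≠ 0 ∧ stabAlg (V a) = H}
  have hcov : ⋃ H, (W H : Set A) = Set.univ := by
    rw [Set.eq_univ_iff_forall]
    intro a
    rw [Set.mem_iUnion]
    by_cases h : a = 0
    · exact ⟨⊥, h ▸ (W ⊥).zero_mem⟩
    · exact ⟨stabAlg (V a), Submodule.subset_span ⟨h, rfl⟩⟩
  obtain ⟨H, hH⟩ := Subspace.exists_eq_top_of_iUnion_eq_univ hcov
  have hstab : ∀ h ∈ H, h ∈ mulStab (A * B) := by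
    intro h hh
    rw [mem_mulStab]
    intro c hc
    refine Submodule.mul_induction_on hc ?_ ?_
    · intro x hx b hb
      have hxW : (⟨x, hx⟩ : A) ∈ W H := by rw [hH]; trivial
      have : ∀ y ∈ W H, h * ((y : L) * b) ∈ A * B := by
        intro y hy
        refine Submodule.span_induction ?_ ?_ ?_ ?_ hy
        · rintro z ⟨hz, hzH⟩
          obtain ⟨h1, h2, _⟩ := hV z hz
          rw [← hzH] at hh
          exact h2 (hh _ (h1 b hb))
        · simp
        · intro u v _ _ hu hv
          have := Submodule.add_mem _ hu hv
          rw [← mul_add, ← add_mul] at this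
          exact this
        · intro r u _ hu
          have := Submodule.smul_mem _ r hu
          rw [← mul_smul_comm, ← smul_mul_assoc] at this
          exact this
      exact this _ hxW
    · intro y z hy hz
      rw [mul_add]
      exact Submodule.add_mem _ hy hz
  obtain ⟨a, ha0, haH⟩ : {a : A | a ≠ 0 ∧ stabAlg (V a) = H}.Nonempty := by
    by_contra hne
    rw [Set.not_nonempty_iff_eq_empty] at hne
    have hbot : W H = ⊥ := by
      change Submodule.span K _ = _
      rw [hne, Submodule.span_empty]
    rw [hH] at hbot
    obtain ⟨x, hx, hx0⟩ := Submodule.exists_mem_ne_zero_of_ne_bot hA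
    have : (⟨x, hx⟩ : A) ∈ (⊤ : Submodule K A) := trivial
    rw [show (⊤ : Submodule K A) = ⊥ from hbot, Submodule.mem_bot] at this
    exact hx0 (congrArg Subtype.val this)
  obtain ⟨_, h2, h3⟩ := hV a ha0
  have i1 := Submodule.finrank_mono h2
  have i2 : finrank K (mulStab (V a)) ≤ finrank K (mulStab (A * B)) := by
    apply Submodule.finrank_mono
    intro x hx
    exact hstab x (haH ▸ hx)
  omega
end

section
/- Let K ⊆ L be a finite extension of fields and let C be a nonzero K-linear subspace of L. Then the stabilizer Stab(C) := {x ∈ L : x·c ∈ C for all c ∈ C} is a subfield of L containing (the image of) K; that is, Stab(C) contains 1 and all scalars from K, is closed under addition and multiplication, and contains the inverse of each of its nonzero elements, so it is the underlying set of an intermediate field of the extension L/K. -/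
/-- For a nonzero `K`-subspace `C` of a finite field extension `L/K`, the stabilizer
`Stab(C) = {x ∈ L : x·C ⊆ C}` is the underlying set of an intermediate field of `L/K`. -/
theorem stmt1 {K L : Type*} [Field K] [Field L] [Algebra K L] [FiniteDimensional K L]
    (C : Submodule K L) (hC : C ≠ ⊥) :
    ∃ F : IntermediateField K L, (F : Set L) = {x : L | ∀ c ∈ C, x * c ∈ C} := by
  let S : Subalgebra K L :=
    { carrier := {x : L | ∀ c ∈ C, x * c ∈ C}
      mul_mem' := fun {a b} ha hb c hc => by
        rw [mul_assoc]
        exact ha _ (hb c hc)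
      add_mem' := fun {a b} ha hb c hc => by
        rw [add_mul]
        exact C.add_mem (ha c hc) (hb c hc)
      algebraMap_mem' := fun r c hc => by
        rw [← Algebra.smul_def]
        exact C.smul_mem r hc }
  refine ⟨S.toIntermediateField fun x hx => ?_, rfl⟩
  exact S.inv_mem_of_algebraic (x := ⟨x, hx⟩) (Algebra.IsAlgebraic.isAlgebraic (R := K) x)
end

section
/- Let K be a field, n a natural number, and M an invertible n × n matrix over K. Suppose S and T are finite sets of indices such that M i j = 0 for every i ∈ S and j ∈ T. Then |S| + |T| ≤ n. -/
/-- An invertible `n × n` matrix over a field cannot have an all-zero block whose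
side lengths sum to more than `n`. -/
theorem stmt3 {K : Type*} [Field K] {n : ℕ} (M : Matrix (Fin n) (Fin n) K)
    (hM : IsUnit M) (S T : Finset (Fin n))
    (h : ∀ i ∈ S, ∀ j ∈ T, M i j = 0) :
    S.card + T.card ≤ n := by
  have h1 : LinearIndependent K M.row := Matrix.linearIndependent_rows_iff_isUnit.2 hM
  have h2 : LinearIndependent K (fun i : S => M.row i) :=
    h1.comp (fun i : S => (i : Fin n)) Subtype.val_injective
  have h3 : LinearIndependent K (fun (i : S) (j : (Tᶜ : Finset (Fin n))) => M i j) := by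
    rw [Fintype.linearIndependent_iff] at h2 ⊢
    intro g hg
    apply h2 g
    funext j
    by_cases hj : j ∈ T
    · simp only [Finset.sum_apply, Pi.smul_apply, Pi.zero_apply, Matrix.row_apply]
      exact Finset.sum_eq_zero fun i _ => by rw [h i i.2 j hj, smul_zero]
    · have := congrFun hg ⟨j, Finset.mem_compl.2 hj⟩
      simpa only [Finset.sum_apply, Pi.smul_apply, Pi.zero_apply, Matrix.row_apply] using this
  have h4 := h3.fintype_card_le_finrank
  rw [Module.finrank_fintype_fun_eq_card, Fintype.card_coe, Fintype.card_coe,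
    Finset.card_compl, Fintype.card_fin] at h4
  have h5 := Finset.card_le_univ T
  rw [Fintype.card_fin] at h5
  omega
end

section
/- Let e₁, e₂, e₃ be integers with 0 < e₁ ≤ e₂ ≤ e₃, e₂ ≤ 2e₁, and e₃ ≤ e₁ + e₂. Then there exist integers f₁ ≤ f₂ with f₁ + f₂ = e₁ + e₂ + e₃, f₁ ≤ 2e₁, f₂ ≤ 2e₂, and f₂ ≤ e₁ + e₃. -/
/-- Every integer point of the polytope `𝒫₄` lifts to an integer point of the
polytope `𝒬` of quintuples `(e₁,e₂,e₃;f₁,f₂)`. -/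
theorem stmt4 (e₁ e₂ e₃ : ℤ) (h0 : 0 < e₁) (h12 : e₁ ≤ e₂) (h23 : e₂ ≤ e₃)
    (h2 : e₂ ≤ 2 * e₁) (h3 : e₃ ≤ e₁ + e₂) :
    ∃ f₁ f₂ : ℤ, f₁ ≤ f₂ ∧ f₁ + f₂ = e₁ + e₂ + e₃ ∧ f₁ ≤ 2 * e₁ ∧ f₂ ≤ 2 * e₂ ∧
      f₂ ≤ e₁ + e₃ := by
  refine ⟨e₁ + e₂ + e₃ - min (2 * e₂) (e₁ + e₃), min (2 * e₂) (e₁ + e₃), ?_, ?_, ?_, ?_, ?_⟩ <;>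
    omega
end

section
/- Fix an integer d ≥ 5. Let S be the set of tuples (e₁, …, e_{d−1}) of positive integers that are nondecreasing, such that the padded sequence (0, e₁, …, e_{d−1}, 0) is concave (its successive differences are nonincreasing), and such that for some integer a ≥ 5 one has e₁ = a, e₂ = 2a, e₃ = 3a, and e₄ ≥ 3a + 5. Let T = { e₁ + ⋯ + e_{d−1} : (e₁,…,e_{d−1}) ∈ S }. Then the set of positive integers not in T is finite; equivalently, there exists N such that every integer n ≥ N lies in T. -/
/-- The sequence `(0, e₁, …, e_{d-1}, 0)`: pad `e` with zeroes at indices `0` and `d`. -/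
def paddedSeq (d : ℕ) (e : ℕ → ℤ) : ℕ → ℤ :=
  fun i => if i = 0 ∨ i = d then 0 else e i

/-- Fix `d ≥ 5`.  All sufficiently large integers are sums `e₁ + ⋯ + e_{d-1}` of a
nondecreasing sequence of positive integers whose zero-padding is concave and which
starts `a, 2a, 3a, e₄` with `a ≥ 5` and `e₄ ≥ 3a + 5`. -/
theorem stmt5 (d : ℕ) (hd : 5 ≤ d) :
    ∃ N : ℤ, ∀ n : ℤ, N ≤ n →
      ∃ e : ℕ → ℤ,
        (∀ i, 1 ≤ i → i ≤ d - 1 → 1 ≤ e i) ∧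
        (∀ i, 1 ≤ i → i < d - 1 → e i ≤ e (i + 1)) ∧
        (∀ i, 1 ≤ i → i ≤ d - 1 →
          paddedSeq d e (i + 1) - paddedSeq d e i ≤
            paddedSeq d e i - paddedSeq d e (i - 1)) ∧
        (∃ a : ℤ, 5 ≤ a ∧ e 1 = a ∧ e 2 = 2 * a ∧ e 3 = 3 * a ∧ 3 * a + 5 ≤ e 4) ∧
        (∑ i ∈ Finset.Icc 1 (d - 1), e i) = n := by
  obtain ⟨k, rfl⟩ : ∃ k, d = k + 5 := ⟨d - 5, by omega⟩
  have hk : k + 5 - 1 = k + 4 := by omega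
  rw [hk]
  obtain ⟨Q, hQ⟩ : ∃ Q : ℤ, Q = ∑ i ∈ Finset.Icc 1 (k + 4), ((min i 3 : ℕ) : ℤ) := ⟨_, rfl⟩
  have hQ1 : 1 ≤ Q := by
    have h1 := Finset.single_le_sum (f := fun i : ℕ => ((min i 3 : ℕ) : ℤ))
      (s := Finset.Icc 1 (k + 4)) (fun i _ => by positivity) (a := 1) (by simp)
    rw [hQ]
    simpa using h1
  obtain ⟨s, hs⟩ : ∃ s : ℤ, s = Q + 5 := ⟨_, rfl⟩
  obtain ⟨F, hF⟩ : ∃ F : ℤ, F = ∑ i ∈ Finset.Icc 1 (k + 4), s * ((min (i - 3) k : ℕ) : ℤ) :=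
    ⟨_, rfl⟩
  refine ⟨s * Q + F + 5, fun n hn => ?_⟩
  obtain ⟨a, ha⟩ : ∃ a : ℤ, a = (n - F - 5) / Q := ⟨_, rfl⟩
  obtain ⟨v, hv⟩ : ∃ v : ℤ, v = 5 + (n - F - 5) % Q := ⟨_, rfl⟩
  have has : s ≤ a := by
    rw [ha]
    exact (Int.le_ediv_iff_mul_le (by omega)).2 (by linarith)
  have hv5 : 5 ≤ v := by
    have := Int.emod_nonneg (n - F - 5) (show Q ≠ 0 by omega)
    omega
  have hvs : v ≤ s := by
    have := Int.emod_lt_of_pos (n - F - 5) (show 0 < Q by omega)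
    omega
  have hsum : a * Q + F + v = n := by
    have := Int.mul_ediv_add_emod (n - F - 5) Q
    rw [ha, hv]
    linarith
  obtain ⟨e, he⟩ : ∃ e : ℕ → ℤ, ∀ i, e i = a * ((min i 3 : ℕ) : ℤ) +
      s * ((min (i - 3) k : ℕ) : ℤ) + if i = k + 4 then v else 0 := ⟨_, fun _ => rfl⟩
  have e0 : e 0 = 0 := by rw [he]; simp
  have e1 : e 1 = a := by rw [he]; simp
  have e2 : e 2 = 2 * a := by rw [he]; simp; ring
  have e3 : e 3 = 3 * a := by rw [he]; simp; ring
  -- the three kinds of increments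
  have dA : ∀ i, i < 3 → e (i + 1) - e i = a := by
    intro i hi
    interval_cases i
    · simp [e0, e1]
    · rw [e1, e2]; ring
    · rw [e2, e3]; ring
  have dB : ∀ i, 3 ≤ i → i < k + 3 → e (i + 1) - e i = s := by
    intro i hi hi'
    obtain ⟨j, rfl⟩ : ∃ j, i = j + 3 := ⟨i - 3, by omega⟩
    rw [he, he, if_neg (by omega), if_neg (by omega)]
    rw [show min (j + 3 + 1) 3 = 3 by omega, show min (j + 3) 3 = 3 by omega,
      show min (j + 3 + 1 - 3) k = j + 1 by omega, show min (j + 3 - 3) k = j by omega]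
    push_cast
    ring
  have dC : e (k + 3 + 1) - e (k + 3) = v := by
    rw [he, he, if_pos rfl, if_neg (by omega)]
    rw [show min (k + 3 + 1) 3 = 3 by omega, show min (k + 3) 3 = 3 by omega,
      show min (k + 3 + 1 - 3) k = k by omega, show min (k + 3 - 3) k = k by omega]
    ring
  have dpos : ∀ i, i < k + 4 → 5 ≤ e (i + 1) - e i := by
    intro i hi
    rcases lt_or_ge i 3 with h | h
    · rw [dA i h]; omega
    rcases lt_or_ge i (k + 3) with h' | h'
    · rw [dB i h h']; omega
    · obtain rfl : i = k + 3 := by omega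
      rw [dC]; omega
  have dmono : ∀ i, i + 1 < k + 4 → e (i + 1 + 1) - e (i + 1) ≤ e (i + 1) - e i := by
    intro i hi
    have hup : e (i + 1 + 1) - e (i + 1) ≤ s ∨ i + 1 < 3 := by
      rcases lt_or_ge (i + 1) 3 with h | h
      · exact Or.inr h
      rcases lt_or_ge (i + 1) (k + 3) with h' | h'
      · rw [dB _ h h']; exact Or.inl le_rfl
      · obtain rfl : i = k + 2 := by omega
        left
        have := dC
        rw [show k + 3 = k + 2 + 1 by omega] at this
        omega
    rcases lt_or_ge i 3 with h | h
    · rw [dA i h]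
      rcases hup with h' | h'
      · omega
      · rw [dA _ h']
    · rw [dB i h (by omega)]
      rcases hup with h' | h' <;> omega
  have epos : ∀ i, i ≤ k + 4 → 0 ≤ e i ∧ (1 ≤ i → 1 ≤ e i) := by
    intro i
    induction i with
    | zero => intro _; simp [e0]
    | succ j ih =>
      intro hj
      have h1 := (ih (by omega)).1
      have h2 := dpos j (by omega)
      constructor
      · omega
      · intro _; omega
  have hpad : ∀ i, i ≤ k + 4 → paddedSeq (k + 5) e i = e i := by
    intro i hi
    unfold paddedSeq
    by_cases h : i = 0
    · simp [h, e0]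
    · rw [if_neg (by omega)]
  refine ⟨e, fun i h1 h2 => (epos i h2).2 h1, ?_, ?_, ?_, ?_⟩
  · intro i _ h2
    have := dpos i h2
    omega
  · intro i h1 h2
    obtain ⟨j, rfl⟩ : ∃ j, i = j + 1 := ⟨i - 1, by omega⟩
    rw [Nat.add_sub_cancel, hpad _ h2, hpad j (by omega)]
    rcases Nat.lt_or_ge (j + 1) (k + 4) with h | h
    · rw [hpad _ (by omega)]
      exact dmono j h
    · obtain rfl : j = k + 3 := by omega
      have h3 : paddedSeq (k + 5) e (k + 3 + 1 + 1) = 0 := by simp [paddedSeq]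
      rw [h3]
      have h4 := dpos (k + 3) (by omega)
      have h5 := (epos (k + 3 + 1) le_rfl).1
      omega
  · refine ⟨a, by omega, e1, e2, e3, ?_⟩
    have h3 := dpos 3 (by omega)
    norm_num at h3
    omega
  · rw [← hsum, hQ, hF, Finset.mul_sum, Finset.sum_congr rfl (fun i _ => he i)]
    rw [Finset.sum_add_distrib, Finset.sum_add_distrib, Finset.sum_ite_eq']
    simp
end

section
/- Fix an integer d ≥ 2. Work in the multivariate polynomial ring R = MvPolynomial over ℚ in variables A₀, A₁, …, A_d, and let f ∈ R[X] be the generic degree-d polynomial f = A₀·X^d + A₁·X^{d−1} + ⋯ + A_{d−1}·X + A_d (each coefficient the corresponding variable, viewed as a constant of R[X]). Then the monomial A₀·A₁²·A₂²⋯A_{d−1}² occurs with nonzero coefficient in the resultant Res(f, f′) ∈ R of f and its derivative f′. -/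
open Polynomial

/-- The Sylvester matrix of two polynomials `f`, `g`, regarded as having degrees (at
most) `m` and `n` respectively: an `(m+n) × (m+n)` matrix whose first `n` rows are the
shifts of the coefficients of `f` and whose remaining `m` rows are the shifts of the
coefficients of `g`. -/
def sylvesterMatrix {R : Type*} [CommRing R] (m n : ℕ) (f g : Polynomial R) :
    Matrix (Fin (m + n)) (Fin (m + n)) R :=
  Matrix.of fun i j =>
    if (i : ℕ) < n then
      (if (i : ℕ) ≤ (j : ℕ) ∧ (j : ℕ) ≤ (i : ℕ) + m then f.coeff (m + i - j) else 0)
    else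
      (if (i : ℕ) - n ≤ (j : ℕ) ∧ (j : ℕ) ≤ ((i : ℕ) - n) + n then
        g.coeff (n + ((i : ℕ) - n) - j) else 0)

/-- The resultant of `f` and `g`, of degrees (at most) `m` and `n`: the determinant of
their Sylvester matrix. -/
def resultantPoly {R : Type*} [CommRing R] (m n : ℕ) (f g : Polynomial R) : R :=
  (sylvesterMatrix m n f g).det

/-- The generic polynomial of degree `d`: `A₀ X^d + A₁ X^{d-1} + ⋯ + A_d` over
`ℚ[A₀, …, A_d]`. -/
noncomputable def genericPoly (d : ℕ) : Polynomial (MvPolynomial (Fin (d + 1)) ℚ) :=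
  ∑ i : Fin (d + 1), Polynomial.C (MvPolynomial.X i) * Polynomial.X ^ (d - (i : ℕ))

theorem resultantPoly_eq {R : Type*} [CommRing R] (m n : ℕ) (f g : Polynomial R) :
    resultantPoly m n f g = Polynomial.resultant f g m n := by
  have h : sylvesterMatrix m n f g =
      (Polynomial.sylvester f g m n).transpose.submatrix Fin.revPerm Fin.revPerm := by
    ext i j
    obtain ⟨i, rfl⟩ := Fin.revPerm.surjective i
    simp only [sylvesterMatrix, Polynomial.sylvester, Matrix.of_apply, Matrix.submatrix_apply,
      Matrix.transpose_apply, Fin.revPerm_apply, Fin.rev_rev, Set.mem_Icc]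
    induction i using Fin.addCases with
    | left i =>
      simp only [Fin.addCases_left, Fin.val_rev, Fin.val_castAdd]
      have hi := i.2
      have hj := j.2
      rw [if_neg (by omega)]
      split_ifs <;> first | omega | rfl | (congr 1; omega)
    | right i =>
      simp only [Fin.addCases_right, Fin.val_rev, Fin.val_natAdd]
      have hi := i.2
      have hj := j.2
      rw [if_pos (by omega)]
      split_ifs <;> first | omega | rfl | (congr 1; omega)
  rw [resultantPoly, h, Matrix.det_submatrix_equiv_self, Matrix.det_transpose, Polynomial.resultant]

theorem resultant_X_mul {R : Type*} [CommRing R] [IsDomain R] [CharZero R] (n : ℕ)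
    (g : Polynomial R) (hg : g.natDegree = n + 1) :
    Polynomial.resultant (X * g) (derivative (X * g)) (n + 2) (n + 1) =
      (-1) ^ (n + 1) * (g.coeff 0 ^ 2 * Polynomial.resultant g (derivative g) (n + 1) n) := by
  have hd : (derivative g).natDegree = n := by
    rw [Polynomial.natDegree_derivative, hg]; rfl
  have hXd : (X * derivative g).natDegree ≤ n + 1 := by
    refine natDegree_mul_le.trans ?_
    simp [hd, add_comm]
  have hq : derivative (X * g) = X * derivative g + g * 1 := by
    rw [derivative_mul, derivative_X]; ring
  have hqd : (derivative (X * g)).natDegree ≤ n + 1 := by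
    rw [hq]
    exact natDegree_add_le_of_degree_le hXd (by simp [hg])
  have h1 := resultant_mul_left X g (derivative (X * g)) (n + 1) hqd
  rw [natDegree_X, hg, show 1 + (n + 1) = n + 2 by ring] at h1
  rw [h1]
  have h2 := resultant_X_pow_left (derivative (X * g)) 1 (n + 1) hqd
  rw [pow_one, pow_one] at h2
  rw [h2, hq, resultant_add_mul_right _ _ _ _ _ (by simp) hg.le]
  have h3 := resultant_mul_right g X (derivative g) (n + 1) hg.le
  rw [natDegree_X, hd, show 1 + n = n + 1 by ring] at h3
  have h4 := resultant_X_pow_right g (n + 1) 1 hg.le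
  rw [pow_one, pow_one] at h4
  rw [h3, h4]
  simp
  ring

theorem killCompl_coeff {σ τ R : Type*} [CommSemiring R] {f : σ → τ} (hf : Function.Injective f)
    (m : σ →₀ ℕ) (p : MvPolynomial τ R) :
    MvPolynomial.coeff m (MvPolynomial.killCompl hf p) =
      MvPolynomial.coeff (m.mapDomain f) p := by
  classical
  induction p using MvPolynomial.induction_on' with
  | add p q hp hq => simp [hp, hq]
  | monomial u a =>
    by_cases h : ∃ v : σ →₀ ℕ, v.mapDomain f = u
    · obtain ⟨v, rfl⟩ := h
      rw [← MvPolynomial.rename_monomial, MvPolynomial.killCompl_rename_app,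
        MvPolynomial.coeff_rename_mapDomain f hf]
    · have h1 : MvPolynomial.coeff (m.mapDomain f) (MvPolynomial.monomial u a) = 0 := by
        rw [MvPolynomial.coeff_monomial, if_neg (fun e => h ⟨m, e.symm⟩)]
      have h2 : MvPolynomial.killCompl hf (MvPolynomial.monomial u a) = 0 := by
        have : ∃ i ∈ u.support, i ∉ Set.range f := by
          by_contra! hc
          exact h ⟨u.comapDomain f hf.injOn,
            Finsupp.mapDomain_comapDomain f hf u (fun i hi => hc i hi)⟩
        obtain ⟨i, hi, hr⟩ := this
        rw [MvPolynomial.killCompl, MvPolynomial.aeval_monomial, Finsupp.prod,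
          Finset.prod_eq_zero hi, mul_zero]
        rw [dif_neg hr, zero_pow (Finsupp.mem_support_iff.1 hi)]
      rw [h1, h2, MvPolynomial.coeff_zero]

theorem genericPoly_coeff_self (d : ℕ) : (genericPoly d).coeff d = MvPolynomial.X 0 := by
  rw [genericPoly, finsetSum_coeff, Finset.sum_eq_single 0]
  · simp
  · intro b _ hb
    have : (b : ℕ) ≠ 0 := fun h => hb (Fin.ext h)
    rw [coeff_C_mul, coeff_X_pow, if_neg (by omega), mul_zero]
  · simp

theorem genericPoly_coeff_zero (d : ℕ) :
    (genericPoly d).coeff 0 = MvPolynomial.X (Fin.last d) := by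
  rw [genericPoly, finsetSum_coeff, Finset.sum_eq_single (Fin.last d)]
  · simp
  · intro b _ hb
    have : (b : ℕ) ≠ d := fun h => hb (Fin.ext h)
    rw [coeff_C_mul, coeff_X_pow, if_neg (by omega), mul_zero]
  · simp

theorem genericPoly_natDegree (d : ℕ) : (genericPoly d).natDegree = d := by
  apply le_antisymm
  · rw [genericPoly]
    refine natDegree_sum_le_of_forall_le _ _ fun i _ => ?_
    refine (natDegree_C_mul_X_pow_le _ _).trans (by omega)
  · apply le_natDegree_of_ne_zero
    rw [genericPoly_coeff_self]
    exact MvPolynomial.X_ne_zero _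

theorem genericPoly_map (d : ℕ) :
    (genericPoly (d + 1)).map
      (MvPolynomial.killCompl (R := ℚ) (Fin.castSucc_injective (d + 1))).toRingHom =
      X * genericPoly d := by
  rw [genericPoly, Fin.sum_univ_castSucc, genericPoly, Finset.mul_sum, Polynomial.map_add,
    Polynomial.map_sum]
  have hl : MvPolynomial.killCompl (R := ℚ) (Fin.castSucc_injective (d + 1))
      (MvPolynomial.X (Fin.last (d + 1))) = 0 := by
    rw [MvPolynomial.killCompl, MvPolynomial.aeval_X, dif_neg]
    rintro ⟨i, hi⟩
    exact Fin.castSucc_ne_last i hi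
  have hc (i : Fin (d + 1)) : MvPolynomial.killCompl (R := ℚ) (Fin.castSucc_injective (d + 1))
      (MvPolynomial.X i.castSucc) = MvPolynomial.X i := by
    rw [← MvPolynomial.rename_X, MvPolynomial.killCompl_rename_app]
  simp only [Polynomial.map_mul, map_C, Polynomial.map_pow, map_X, AlgHom.toRingHom_eq_coe,
    RingHom.coe_coe, hl, hc, C_0, zero_mul, add_zero]
  refine Finset.sum_congr rfl fun i _ => ?_
  rw [Fin.val_castSucc, show d + 1 - (i : ℕ) = (d - i) + 1 by omega, pow_succ]
  ring

/-- The exponent vector. -/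
noncomputable def expo (d : ℕ) : Fin (d + 1) →₀ ℕ :=
  Finsupp.equivFunOnFinite.symm fun i : Fin (d + 1) =>
        if (i : ℕ) = 0 then 1 else if (i : ℕ) = d then 0 else 2

theorem expo_succ (n : ℕ) : expo (n + 2) =
    (Finsupp.single (Fin.last (n + 1)) 2 + expo (n + 1)).mapDomain Fin.castSucc := by
  ext i
  induction i using Fin.lastCases with
  | last =>
    rw [Finsupp.mapDomain_of_notMem_range]
    · simp [expo]
    · rintro ⟨i, hi⟩
      exact Fin.castSucc_ne_last i hi
  | cast i =>
    rw [Finsupp.mapDomain_apply (Fin.castSucc_injective _)]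
    have := i.2
    simp only [expo, Finsupp.equivFunOnFinite_symm_apply_apply, Finsupp.add_apply,
      Finsupp.single_apply, Fin.ext_iff, Fin.val_castSucc, Fin.val_last]
    split_ifs <;> omega

theorem main_aux (n : ℕ) : MvPolynomial.coeff (expo (n + 1))
    (Polynomial.resultant (genericPoly (n + 1)) (derivative (genericPoly (n + 1)))
      (n + 1) n) ≠ 0 := by
  induction n with
  | zero =>
    have h0 : (derivative (genericPoly (0 + 1))).coeff 0 = MvPolynomial.X 0 := by
      rw [coeff_derivative, genericPoly_coeff_self]; simp
    rw [resultant_zero_right_deg, h0, show expo (0 + 1) = Finsupp.single 0 1 from ?_]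
    · simp
    · ext i
      fin_cases i <;> simp [expo]
  | succ n ih =>
    rw [expo_succ, ← killCompl_coeff (Fin.castSucc_injective _)]
    have h := resultant_map_map (genericPoly (n + 2)) (derivative (genericPoly (n + 2)))
      (n + 2) (n + 1)
      (MvPolynomial.killCompl (R := ℚ) (Fin.castSucc_injective (n + 2))).toRingHom
    rw [← derivative_map, genericPoly_map,
      resultant_X_mul n _ (genericPoly_natDegree _), genericPoly_coeff_zero] at h
    change _ = MvPolynomial.killCompl (R := ℚ) (Fin.castSucc_injective (n + 2)) _ at h
    rw [← h]
    have hs : ((-1 : MvPolynomial (Fin (n + 1 + 1)) ℚ) ^ (n + 1)) =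
        MvPolynomial.C ((-1) ^ (n + 1)) := by simp
    rw [hs, MvPolynomial.coeff_C_mul, MvPolynomial.X_pow_eq_monomial,
      MvPolynomial.coeff_monomial_mul, one_mul]
    exact mul_ne_zero (pow_ne_zero _ (by norm_num)) ih

/-- The monomial `A₀ · A₁² ⋯ A_{d-1}²` occurs with nonzero coefficient in the resultant
`Res(f, f′)` of the generic degree-`d` polynomial `f` and its derivative. -/
theorem stmt7 (d : ℕ) (hd : 2 ≤ d) :
    MvPolynomial.coeff
      (Finsupp.equivFunOnFinite.symm fun i : Fin (d + 1) =>
        if (i : ℕ) = 0 then 1 else if (i : ℕ) = d then 0 else 2)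
      (resultantPoly d (d - 1) (genericPoly d)
        (Polynomial.derivative (genericPoly d))) ≠ 0 := by
  obtain ⟨n, rfl⟩ : ∃ n, d = n + 1 := ⟨d - 1, by omega⟩
  rw [resultantPoly_eq]
  exact main_aux n
end

section
/- Define 𝒬 ⊂ ℝ⁵ as the set of quintuples (e₁, e₂, e₃, f₁, f₂) satisfying e₁ + e₂ + e₃ = 1, f₁ + f₂ = 1, e₁ ≤ e₂ ≤ e₃, f₁ ≤ f₂, f₁ ≤ 2e₁, f₂ ≤ 2e₂, and f₂ ≤ e₁ + e₃. Then 𝒬 equals the convex hull in ℝ⁵ of the six points (1/3, 1/3, 1/3, 1/2, 1/2), (1/4, 1/4, 1/2, 1/2, 1/2), (1/4, 3/8, 3/8, 1/2, 1/2), (1/3, 1/3, 1/3, 1/3, 2/3), (1/5, 2/5, 2/5, 2/5, 3/5), and (1/6, 1/3, 1/2, 1/3, 2/3). -/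
/-- The polytope `𝒬` of normalized invariants `(e₁, e₂, e₃, f₁, f₂)` of primitive
tetragonal covers. -/
def polytopeQ : Set (Fin 5 → ℝ) :=
  {v | v 0 + v 1 + v 2 = 1 ∧ v 3 + v 4 = 1 ∧ v 0 ≤ v 1 ∧ v 1 ≤ v 2 ∧ v 3 ≤ v 4 ∧
       v 3 ≤ 2 * v 0 ∧ v 4 ≤ 2 * v 1 ∧ v 4 ≤ v 0 + v 2}

/-- A convex combination of four points of a convex set lies in the set. -/
lemma four_mem {s : Set (Fin 5 → ℝ)} (hs : Convex ℝ s) {p q r t : Fin 5 → ℝ}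
    (hp : p ∈ s) (hq : q ∈ s) (hr : r ∈ s) (ht : t ∈ s) {a b c d : ℝ}
    (ha : 0 ≤ a) (hb : 0 ≤ b) (hc : 0 ≤ c) (hd : 0 ≤ d) (h : a + b + c + d = 1) :
    a • p + b • q + c • r + d • t ∈ s := by
  have := hs.sum_mem (t := Finset.univ) (w := ![a, b, c, d]) (z := ![p, q, r, t])
    (by intro i _; fin_cases i <;> simpa)
    (by simpa [Fin.sum_univ_four] using h)
    (by intro i _; fin_cases i <;> simpa)
  simpa [Fin.sum_univ_four] using this

/-- `𝒬` is the convex hull of its six vertices. -/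
theorem stmt10 :
    polytopeQ = convexHull ℝ
      {![(1:ℝ)/3, 1/3, 1/3, 1/2, 1/2], ![1/4, 1/4, 1/2, 1/2, 1/2],
        ![1/4, 3/8, 3/8, 1/2, 1/2], ![1/3, 1/3, 1/3, 1/3, 2/3],
        ![1/5, 2/5, 2/5, 2/5, 3/5], ![1/6, 1/3, 1/2, 1/3, 2/3]} := by
  apply Set.Subset.antisymm
  · rintro v ⟨h1, h2, h3, h4, h5, h6, h7, h8⟩
    set S : Set (Fin 5 → ℝ) := {![(1:ℝ)/3, 1/3, 1/3, 1/2, 1/2], ![(1:ℝ)/4, 1/4, 1/2, 1/2, 1/2], ![(1:ℝ)/4, 3/8, 3/8, 1/2, 1/2], ![(1:ℝ)/3, 1/3, 1/3, 1/3, 2/3], ![(1:ℝ)/5, 2/5, 2/5, 2/5, 3/5], ![(1:ℝ)/6, 1/3, 1/2, 1/3, 2/3]}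
      with hS
    have hA : ![(1:ℝ)/3, 1/3, 1/3, 1/2, 1/2] ∈ convexHull ℝ S :=
      subset_convexHull ℝ S (by simp [hS])
    have hB : ![(1:ℝ)/4, 1/4, 1/2, 1/2, 1/2] ∈ convexHull ℝ S :=
      subset_convexHull ℝ S (by simp [hS])
    have hC : ![(1:ℝ)/4, 3/8, 3/8, 1/2, 1/2] ∈ convexHull ℝ S :=
      subset_convexHull ℝ S (by simp [hS])
    have hD : ![(1:ℝ)/3, 1/3, 1/3, 1/3, 2/3] ∈ convexHull ℝ S :=
      subset_convexHull ℝ S (by simp [hS])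
    have hE : ![(1:ℝ)/5, 2/5, 2/5, 2/5, 3/5] ∈ convexHull ℝ S :=
      subset_convexHull ℝ S (by simp [hS])
    have hF : ![(1:ℝ)/6, 1/3, 1/2, 1/3, 2/3] ∈ convexHull ℝ S :=
      subset_convexHull ℝ S (by simp [hS])
    rcases le_total (v 0 + v 1) (v 4) with hc | hc
    · have key := four_mem (convex_convexHull ℝ S) hF hE hD hB
        (a := 6 * (v 4 - v 0 - v 1))
        (b := 5 * (2 * v 1 - v 4))
        (c := 3 * (v 4 - 1 + 2 * v 0))
        (d := 4 * (1 - v 1 - v 4))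
        (by linarith) (by linarith) (by linarith) (by linarith) (by ring)
      convert key using 1
      ext i
      fin_cases i <;> simp <;> linarith
    rcases le_total 1 (v 0 - v 1 + 2 * v 4) with hd | hd
    · have key := four_mem (convex_convexHull ℝ S) hD hB hA hE
        (a := 3 * (v 0 - v 1 + 2 * v 4 - 1))
        (b := 4 * (1 - v 0 - 2 * v 1))
        (c := 6 * (v 0 + v 1 - v 4))
        (d := 5 * (v 1 - v 0))
        (by linarith) (by linarith) (by linarith) (by linarith) (by ring)
      convert key using 1
      ext i
      fin_cases i <;> simp <;> linarith
    · have key := four_mem (convex_convexHull ℝ S) hC hE hB hA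
        (a := 8 * (1 - v 0 + v 1 - 2 * v 4))
        (b := 10 * v 4 - 5)
        (c := 4 * (1 - v 0 - 2 * v 1))
        (d := 6 * (v 4 - 1 + 2 * v 0))
        (by linarith) (by linarith) (by linarith) (by linarith) (by ring)
      convert key using 1
      ext i
      fin_cases i <;> simp <;> linarith
  · apply convexHull_min
    · intro v hv
      simp only [Set.mem_insert_iff, Set.mem_singleton_iff] at hv
      rcases hv with rfl | rfl | rfl | rfl | rfl | rfl <;>
        simp [polytopeQ] <;> norm_num
    · rintro x ⟨h1, h2, h3, h4, h5, h6, h7, h8⟩ y ⟨k1, k2, k3, k4, k5, k6, k7, k8⟩ a b ha hb hab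
      simp only [polytopeQ, Set.mem_setOf_eq, Pi.add_apply, Pi.smul_apply, smul_eq_mul]
      refine ⟨?_, ?_, ?_, ?_, ?_, ?_, ?_, ?_⟩
      · linear_combination a * h1 + b * k1 + hab
      · linear_combination a * h2 + b * k2 + hab
      · linear_combination a * h3 + b * k3
      · linear_combination a * h4 + b * k4
      · linear_combination a * h5 + b * k5
      · linear_combination a * h6 + b * k6
      · linear_combination a * h7 + b * k7
      · linear_combination a * h8 + b * k8
end

section
/- Define 𝒬 ⊂ ℝ⁵ as the set of quintuples (e₁, e₂, e₃, f₁, f₂) satisfying e₁ + e₂ + e₃ = 1, f₁ + f₂ = 1, e₁ ≤ e₂ ≤ e₃, f₁ ≤ f₂, f₁ ≤ 2e₁, f₂ ≤ 2e₂, and f₂ ≤ e₁ + e₃. Then the image of 𝒬 under the projection (e₁, e₂, e₃, f₁, f₂) ↦ (e₁, e₂, e₃) equals the polytope 𝒫₄ = { (x₁, x₂, x₃) ∈ ℝ³ : x₁ + x₂ + x₃ = 1, 0 ≤ x₁ ≤ x₂ ≤ x₃, x₂ ≤ 2x₁, x₃ ≤ x₁ + x₂ }. -/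
/-- The polytope `𝒫₄` of normalized scrollar invariants of primitive tetragonal covers. -/
def polytopeP4 : Set (Fin 3 → ℝ) :=
  {x | x 0 + x 1 + x 2 = 1 ∧ 0 ≤ x 0 ∧ x 0 ≤ x 1 ∧ x 1 ≤ x 2 ∧
       x 1 ≤ 2 * x 0 ∧ x 2 ≤ x 0 + x 1}

/-- The projection of `𝒬` to the first three coordinates is `𝒫₄`. -/
theorem stmt11 :
    (fun v : Fin 5 → ℝ => ![v 0, v 1, v 2]) '' polytopeQ = polytopeP4 := by
  ext x
  simp only [Set.mem_image, polytopeQ, polytopeP4, Set.mem_setOf_eq]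
  constructor
  · rintro ⟨v, ⟨h1, h2, h3, h4, h5, h6, h7, h8⟩, rfl⟩
    simp only [Matrix.cons_val]
    refine ⟨h1, ?_, h3, h4, ?_, ?_⟩ <;> linarith
  · rintro ⟨h1, h2, h3, h4, h5, h6⟩
    have ha := min_le_left (2 * x 1) (x 0 + x 2)
    have hb := min_le_right (2 * x 1) (x 0 + x 2)
    have hc : 1 / 2 ≤ min (2 * x 1) (x 0 + x 2) := le_min (by linarith) (by linarith)
    have hd : 1 - 2 * x 0 ≤ min (2 * x 1) (x 0 + x 2) := le_min (by linarith) (by linarith)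
    generalize min (2 * x 1) (x 0 + x 2) = m at ha hb hc hd
    refine ⟨![x 0, x 1, x 2, 1 - m, m], ?_, ?_⟩
    · simp only [Matrix.cons_val]
      refine ⟨h1, ?_, h3, h4, ?_, ?_, ha, hb⟩ <;> linarith
    · ext i
      fin_cases i <;> rfl
end

section
/- Let K ⊆ L be a finite extension of fields and let x₁, x₂ ∈ L. Let A be the K-linear span of {1, x₁} and B the K-linear span of {1, x₁, x₂}. Assume dim_K(A) = 2, dim_K(B) = 3, and that A is closed under multiplication (a·a′ ∈ A for all a, a′ ∈ A). Then the K-dimension of AB (the K-span of {ab : a ∈ A, b ∈ B}) is even and at least 4. -/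
open Module

/-- If `A = span {1, x₁}` is a two-dimensional `K`-subalgebra of a finite extension `L/K`
and `B = span {1, x₁, x₂}` is three-dimensional, then `dim_K (A·B)` is even and `≥ 4`. -/
theorem stmt13 {K L : Type*} [Field K] [Field L] [Algebra K L] [FiniteDimensional K L]
    (x₁ x₂ : L)
    (A : Submodule K L) (hA : A = Submodule.span K {1, x₁})
    (B : Submodule K L) (hB : B = Submodule.span K {1, x₁, x₂})
    (hdimA : finrank K A = 2) (hdimB : finrank K B = 3)
    (hmul : ∀ a ∈ A, ∀ a' ∈ A, a * a' ∈ A) :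
    Even (finrank K (A * B : Submodule K L)) ∧
      4 ≤ finrank K (A * B : Submodule K L) := by
  have h1 : (1 : L) ∈ A := by
    rw [hA]; exact Submodule.subset_span (by simp)
  let S : Subalgebra K L := A.toSubalgebra h1 (fun a b ha hb => hmul a ha b hb)
  have hS : IsField S := Subalgebra.isField_of_algebraic S
  let F : IntermediateField K L := S.toIntermediateField' hS
  have hF : finrank K F = 2 := hdimA
  let W : Submodule F L :=
    { carrier := (A * B : Submodule K L)
      add_mem' := fun ha hb => (A * B).add_mem ha hb
      zero_mem' := (A * B).zero_mem
      smul_mem' := by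
        rintro ⟨c, hc⟩ x hx
        have hc' : c ∈ A := hc
        change c * x ∈ A * B
        have h2 : c * x ∈ A * (A * B) := Submodule.mul_mem_mul hc' hx
        rw [← mul_assoc] at h2
        exact mul_le_mul' (Submodule.mul_le.2 hmul) le_rfl h2 }
  have hW : finrank K F * finrank F W = finrank K W := Module.finrank_mul_finrank K F W
  have hW' : finrank K W = finrank K (A * B : Submodule K L) := rfl
  have hle : B ≤ A * B := fun b hb => by
    simpa using Submodule.mul_mem_mul h1 hb
  have h3 := Submodule.finrank_mono hle
  rw [hF, hW'] at hW
  rw [hdimB] at h3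
  refine ⟨⟨finrank F W, by omega⟩, by omega⟩
end

section
/- Let K ⊆ L be a finite extension of fields of characteristic zero of degree d ≥ 2, and assume the extension has no proper intermediate fields: every intermediate field F with K ⊆ F ⊆ L satisfies F = K or F = L. Let x₀ = 1, x₁, …, x_{d−1} be a K-basis of L. Then for all i, j ≥ 1 with i + j ≤ d − 1, the K-linear span of the products { x_a · x_b : 0 ≤ a ≤ i, 0 ≤ b ≤ j } is NOT contained in the K-linear span of { x₀, x₁, …, x_{i+j−1} }. -/
open Module

theorem linear_cauchy_davenport {K L : Type*} [Field K] [Field L] [Algebra K L]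
    [FiniteDimensional K L]
    (hprim : ∀ F : IntermediateField K L, F = ⊥ ∨ F = ⊤)
    (C : Submodule K L) (hC : C ≠ ⊤) :
    ∀ (n : ℕ) (A B : Submodule K L), finrank K B = n → (1 : L) ∈ A → (1 : L) ∈ B →
      (∀ a ∈ A, ∀ b ∈ B, a * b ∈ C) → finrank K A + finrank K B ≤ finrank K C + 1 := by
  intro n
  induction n using Nat.strong_induction_on with
  | _ n ih =>
  intro A B hn hA hB hAB
  have hAC : A ≤ C := fun a ha => by simpa using hAB a ha 1 hB
  by_cases hstab : ∀ e ∈ A, ∀ b ∈ B, e * b ∈ A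
  · by_cases hbot : B ≤ Submodule.span K {(1 : L)}
    · have h1 : finrank K B ≤ 1 := by
        refine (Submodule.finrank_mono hbot).trans ?_
        rw [finrank_span_singleton one_ne_zero]
      have h2 := Submodule.finrank_mono hAC
      omega
    · exfalso
      obtain ⟨b, hb, hb1⟩ := SetLike.not_le_iff_exists.mp hbot
      let S : Subalgebra K L :=
        { carrier := {x | ∀ a ∈ A, a * x ∈ A}
          mul_mem' := by
            intro x y hx hy a ha
            rw [← mul_assoc]
            exact hy _ (hx a ha)
          add_mem' := by
            intro x y hx hy a ha
            rw [mul_add]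
            exact A.add_mem (hx a ha) (hy a ha)
          algebraMap_mem' := by
            intro r a ha
            rw [mul_comm, ← Algebra.smul_def]
            exact A.smul_mem r ha }
      have hbS : b ∈ S := fun a ha => hstab a ha b hb
      have hS : ∀ x : L, x ∈ S := by
        intro x
        have hF := hprim (IntermediateField.adjoin K {b})
        rcases hF with hF | hF
        · exfalso
          apply hb1
          rw [IntermediateField.adjoin_simple_eq_bot_iff, IntermediateField.mem_bot] at hF
          obtain ⟨r, hr⟩ := hF
          rw [Submodule.mem_span_singleton]
          exact ⟨r, by rw [← hr, Algebra.smul_def, mul_one]⟩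
        · have hx : x ∈ (IntermediateField.adjoin K {b}).toSubalgebra := by
            rw [hF]; trivial
          rw [IntermediateField.adjoin_simple_toSubalgebra_of_isAlgebraic
            (Algebra.IsAlgebraic.isAlgebraic b)] at hx
          exact (Algebra.adjoin_le (Set.singleton_subset_iff.mpr hbS)) hx
      apply hC
      rw [eq_top_iff]
      intro x _
      apply hAC
      simpa using hS x 1 hA
  · push Not at hstab
    obtain ⟨e, he, b, hb, heb⟩ := hstab
    have he0 : e ≠ 0 := by
      rintro rfl
      simp at heb
    let f : L →ₗ[K] L := LinearMap.mulLeft K e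
    have hf : Function.Injective f := fun x y hxy => mul_left_cancel₀ he0 hxy
    let B' : Submodule K L := B ⊓ A.comap f
    let A' : Submodule K L := A ⊔ B.map f
    have hB'lt : finrank K B' < n := by
      rw [← hn]
      apply Submodule.finrank_lt_finrank_of_lt
      refine lt_of_le_of_ne inf_le_left fun h => heb ?_
      have : b ∈ B' := by rw [h]; exact hb
      exact this.2
    have h1 : finrank K (B.map f) = finrank K B := (LinearEquiv.finrank_eq (Submodule.equivMapOfInjective f hf B)).symm
    have h2 : finrank K (B'.map f) = finrank K B' := (LinearEquiv.finrank_eq (Submodule.equivMapOfInjective f hf B')).symm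
    have h3 : A ⊓ B.map f = B'.map f := by
      ext y
      constructor
      · rintro ⟨hy, x, hx, rfl⟩
        exact ⟨x, ⟨hx, hy⟩, rfl⟩
      · rintro ⟨x, ⟨hx, hy⟩, rfl⟩
        exact ⟨hy, x, hx, rfl⟩
    have h4 := Submodule.finrank_sup_add_finrank_inf_eq A (B.map f)
    rw [h3, h2, h1] at h4
    have h5 := ih _ hB'lt A' B' rfl (Submodule.mem_sup_left hA)
      ⟨hB, by simpa [f] using he⟩ (by
        rintro a ha c ⟨hc, hc'⟩
        obtain ⟨a1, ha1, a2, ⟨x, hx, rfl⟩, rfl⟩ := Submodule.mem_sup.mp ha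
        rw [add_mul]
        refine C.add_mem (hAB _ ha1 _ hc) ?_
        have h := hAB _ hc' _ hx
        have h6 : f x * c = f c * x := by
          simp only [f, LinearMap.mulLeft_apply]; ring
        rw [h6]
        exact h)
    change finrank K A' + finrank K B' = _ at h4
    omega

theorem finrank_initial_span {K L : Type*} [Field K] [Field L] [Algebra K L]
    {d : ℕ} (v : Basis (Fin d) K L) (m : ℕ) (hm : m < d) :
    finrank K (Submodule.span K (v '' {a : Fin d | (a : ℕ) ≤ m})) = m + 1 := by
  classical
  have h := finrank_span_set_eq_card
    (v.linearIndependent.linearIndepOn_id.mono (Set.image_subset_range v {a : Fin d | (a : ℕ) ≤ m}))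
  rw [h, Set.toFinset_card, Set.card_image_of_injective _ v.injective]
  have : {a : Fin d | (a : ℕ) ≤ m} = Set.Iic (⟨m, hm⟩ : Fin d) := by
    ext a; simp [Fin.le_def]
  simp [this]

/-- For a primitive finite extension `L/K` of degree `d` in characteristic zero and a
`K`-basis `1 = v₀, v₁, …, v_{d-1}` of `L`, the span of the products `v_a · v_b` with
`a ≤ i`, `b ≤ j` (where `i, j ≥ 1`, `i + j ≤ d - 1`) is never contained in the span of
`v₀, …, v_{i+j-1}`. -/
theorem stmt14 {K L : Type*} [Field K] [Field L] [Algebra K L] [CharZero K]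
    [FiniteDimensional K L] (d : ℕ) (hd : 2 ≤ d) (hdim : finrank K L = d)
    (hprim : ∀ F : IntermediateField K L, F = ⊥ ∨ F = ⊤)
    (v : Basis (Fin d) K L) (hv0 : v ⟨0, by omega⟩ = 1) :
    ∀ i j : ℕ, 1 ≤ i → 1 ≤ j → i + j ≤ d - 1 →
      ¬ (Submodule.span K
            {y : L | ∃ a b : Fin d, (a : ℕ) ≤ i ∧ (b : ℕ) ≤ j ∧ y = v a * v b} ≤
          Submodule.span K (v '' {a : Fin d | (a : ℕ) ≤ i + j - 1})) := by
  intro i j hi hj hij hle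
  set C := Submodule.span K (v '' {a : Fin d | (a : ℕ) ≤ i + j - 1}) with hCdef
  have hCr : finrank K C = i + j - 1 + 1 := finrank_initial_span v _ (by omega)
  have hC : C ≠ ⊤ := by
    intro h
    rw [h, finrank_top] at hCr
    omega
  have hone : ∀ m : ℕ, (1 : L) ∈ Submodule.span K (v '' {a : Fin d | (a : ℕ) ≤ m}) := by
    intro m
    exact Submodule.subset_span ⟨⟨0, by omega⟩, by simp, hv0⟩
  have h := linear_cauchy_davenport hprim C hC _
    (Submodule.span K (v '' {a : Fin d | (a : ℕ) ≤ i}))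
    (Submodule.span K (v '' {a : Fin d | (a : ℕ) ≤ j})) rfl (hone i) (hone j) (by
      intro a ha b hb
      have hab := Submodule.mul_mem_mul ha hb
      rw [Submodule.span_mul_span] at hab
      refine hle (Submodule.span_mono ?_ hab)
      rintro _ ⟨_, ⟨a, ha, rfl⟩, _, ⟨b, hb, rfl⟩, rfl⟩
      exact ⟨a, b, ha, hb, rfl⟩)
  rw [finrank_initial_span v i (by omega), finrank_initial_span v j (by omega)] at h
  omega
end

section
/- Define 𝒬′ ⊂ ℝ⁵ as the set of quintuples (e₁, e₂, e₃, f₁, f₂) satisfying e₁ + e₂ + e₃ = 1, f₁ + f₂ = 1, e₁ ≤ e₂ ≤ e₃, f₁ ≤ f₂, f₁ ≤ 2e₁, and f₂ ≤ 2e₂. Then 𝒬′ equals the convex hull in ℝ⁵ of the five points (1/3, 1/3, 1/3, 1/2, 1/2), (1/4, 1/4, 1/2, 1/2, 1/2), (1/4, 3/8, 3/8, 1/2, 1/2), (1/3, 1/3, 1/3, 1/3, 2/3), and (0, 1/2, 1/2, 0, 1). -/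
/-- The polytope `𝒬′` of normalized invariants `(e₁, e₂, e₃, f₁, f₂)` of all
tetragonal covers. -/
def polytopeQ' : Set (Fin 5 → ℝ) :=
  {v | v 0 + v 1 + v 2 = 1 ∧ v 3 + v 4 = 1 ∧ v 0 ≤ v 1 ∧ v 1 ≤ v 2 ∧ v 3 ≤ v 4 ∧
       v 3 ≤ 2 * v 0 ∧ v 4 ≤ 2 * v 1}

/-- `𝒬′` is the convex hull of its five vertices. -/
theorem stmt15 :
    polytopeQ' = convexHull ℝ
      {![(1:ℝ)/3, 1/3, 1/3, 1/2, 1/2], ![1/4, 1/4, 1/2, 1/2, 1/2],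
        ![1/4, 3/8, 3/8, 1/2, 1/2], ![1/3, 1/3, 1/3, 1/3, 2/3],
        ![0, 1/2, 1/2, 0, 1]} := by
  apply Set.Subset.antisymm
  · rintro v ⟨h1, h2, h3, h4, h5, h6, h7⟩
    -- the weight `t` of the last vertex
    obtain ⟨t, t0, t1, t2, t3⟩ : ∃ t : ℝ, 0 ≤ t ∧ 2 * (v 1 - v 0) - (2 * v 1 - v 4) ≤ t ∧
        t ≤ 2 * (1 / 2 - v 3) ∧ t ≤ 2 * (v 1 - v 0) := by
      refine ⟨max 0 (2 * (v 1 - v 0) - (2 * v 1 - v 4)), le_max_left _ _, le_max_right _ _, ?_, ?_⟩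
      · apply max_le <;> linarith
      · apply max_le <;> linarith
    set S : Set (Fin 5 → ℝ) := {![(1:ℝ)/3, 1/3, 1/3, 1/2, 1/2], ![1/4, 1/4, 1/2, 1/2, 1/2],
        ![1/4, 3/8, 3/8, 1/2, 1/2], ![1/3, 1/3, 1/3, 1/3, 2/3],
        ![0, 1/2, 1/2, 0, 1]} with hS
    let z : Fin 5 → (Fin 5 → ℝ) := ![![(1:ℝ)/3, 1/3, 1/3, 1/2, 1/2], ![1/4, 1/4, 1/2, 1/2, 1/2],
        ![1/4, 3/8, 3/8, 1/2, 1/2], ![1/3, 1/3, 1/3, 1/3, 2/3],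
        ![0, 1/2, 1/2, 0, 1]]
    let w : Fin 5 → ℝ := ![6 * (2 * v 1 - v 4) - 12 * (v 1 - v 0) + 6 * t,
      4 * (1 - v 0 - 2 * v 1), 8 * (v 1 - v 0) - 4 * t, 6 * (1 / 2 - v 3) - 3 * t, t]
    have key : ∑ i, w i • z i ∈ convexHull ℝ S := by
      apply (convex_convexHull ℝ S).sum_mem
      · intro i _
        fin_cases i <;> simp [w] <;> linarith
      · simp [w, Fin.sum_univ_five]
        linarith
      · intro i _
        apply subset_convexHull
        fin_cases i <;> simp [z, hS]
    convert key using 1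
    ext j
    fin_cases j <;> simp [w, z, Fin.sum_univ_five] <;> linarith
  · apply convexHull_min
    · intro v hv
      simp only [Set.mem_insert_iff, Set.mem_singleton_iff] at hv
      rcases hv with rfl | rfl | rfl | rfl | rfl <;> simp [polytopeQ'] <;> norm_num
    · rintro x ⟨h1, h2, h3, h4, h5, h6, h7⟩ y ⟨k1, k2, k3, k4, k5, k6, k7⟩ a b ha hb hab
      simp only [polytopeQ', Set.mem_ofPred_eq, Pi.add_apply, Pi.smul_apply, smul_eq_mul]
      refine ⟨?_, ?_, ?_, ?_, ?_, ?_, ?_⟩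
      · linear_combination a * h1 + b * k1 + hab
      · linear_combination a * h2 + b * k2 + hab
      · linear_combination a * h3 + b * k3
      · linear_combination a * h4 + b * k4
      · linear_combination a * h5 + b * k5
      · linear_combination a * h6 + b * k6
      · linear_combination a * h7 + b * k7
end
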